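/- Let d be an odd positive integer and let 𝒟 = {D₁, D₂} be nontrivial partitions of d (neither equal to [d] nor to [1,…,1]) with ν(D₁) + ν(D₂) = d − 1 and ν(D₁) ≥ ν(D₂). If D₁ contains parts x and y with x > max{y, 2} and gcd(y, d) = 1, then there exist permutations α ∈ D₁ and β ∈ D₂ of the d-element set and a permutation ω with ω² = αβ such that the group ⟨α, β, ω⟩ is a primitive (in particular transitive) permutation group. -/

import Mathlib

/-- The cycle type of a permutation, including fixed points as parts equal to `1`. -/
def fullCycleType {Ω : Type*} [Fintype Ω] [DecidableEq Ω] (σ : Equiv.Perm Ω) : Multiset ℕ :=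
  σ.cycleType + Multiset.replicate (Fintype.card Ω - σ.support.card) 1

/-- A multiset of positive integers summing to `d`, i.e. a partition of `d`. -/
def IsPartitionOf (d : ℕ) (D : Multiset ℕ) : Prop :=
  (∀ x ∈ D, 0 < x) ∧ D.sum = d

/-- The defect `ν(D) = Σⱼ (dⱼ − 1)` of a partition. -/
def nu (D : Multiset ℕ) : ℕ := (D.map (· - 1)).sum

/-- The partition `[2,…,2,1]` of an odd number `d`, with `(d−1)/2` parts equal to `2`. -/
def twosAndOne (d : ℕ) : Multiset ℕ := Multiset.replicate ((d - 1) / 2) 2 + {1}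

/-- A subgroup of the symmetric group on `Ω` is transitive. -/
def SubgroupTransitive {Ω : Type*} (G : Subgroup (Equiv.Perm Ω)) : Prop :=
  ∀ x y : Ω, ∃ g ∈ G, g x = y

/-- `Λ` is a block for the subgroup `G` of the symmetric group on `Ω`. -/
def IsBlockOf {Ω : Type*} (G : Subgroup (Equiv.Perm Ω)) (Λ : Set Ω) : Prop :=
  Λ.Nonempty ∧ ∀ g ∈ G, (⇑g '' Λ = Λ ∨ Disjoint (⇑g '' Λ) Λ)

/-- A block is trivial if it is a singleton or the whole set. -/
def TrivialBlock {Ω : Type*} (Λ : Set Ω) : Prop :=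
  (∃ x, Λ = {x}) ∨ Λ = Set.univ

/-- A subgroup of the symmetric group is primitive: transitive with only trivial blocks. -/
def SubgroupPrimitive {Ω : Type*} (G : Subgroup (Equiv.Perm Ω)) : Prop :=
  SubgroupTransitive G ∧ ∀ Λ : Set Ω, IsBlockOf G Λ → TrivialBlock Λ

/-- A subgroup of the symmetric group is imprimitive: transitive but not primitive. -/
def SubgroupImprimitive {Ω : Type*} (G : Subgroup (Equiv.Perm Ω)) : Prop :=
  SubgroupTransitive G ∧ ¬ SubgroupPrimitive G

/-- The orbit of `x` under a subgroup `G` of the symmetric group on `Ω`. -/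
def orbSet {Ω : Type*} (G : Subgroup (Equiv.Perm Ω)) (x : Ω) : Set Ω :=
  {y | ∃ g ∈ G, g x = y}

/-- The number of orbits of a subgroup `G` of the symmetric group on `Ω`. -/
noncomputable def numOrbits {Ω : Type*} (G : Subgroup (Equiv.Perm Ω)) : ℕ :=
  Nat.card (Set.range (orbSet G))

/-!
View a pair of permutations `(α, β)` as a bipartite map whose edges are the points: the cycles of
`α` and `β` are its black and white vertices and the cycles of `αβ` are its faces. Up to replacing
`y` by `1` when `1 ∈ D₁`, the count `ν(D₁) + ν(D₂) = d − 1` with `ν(D₁) ≥ ν(D₂)` forces at least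
`2y − 1` parts equal to `1` in `D₂`. A black vertex of degree `y` all of whose white neighbours are
leaves is then split off as a component with one face, and a map with two faces, of lengths `y` and
`m = d − 2y`, is built from the remaining degrees: start from a digon or a square and attach leaves
one at a time, on the outer side to reach the prescribed degrees and at the vertex of degree `x`
inside the cycle to lengthen the inner face.

Now `αβ` has cycle type `[y, y, m]` with `m` odd, so it is the square of a permutation `ω` of cycle
type `[2y, m]`. Since `α` links the two cycles of `ω`, the group is transitive. A block meeting both
cycles of `ω` is moved by `ω` with a period dividing both `2y` and `m`, which are coprime; it is
therefore fixed by `ω` and contains everything. Any other block `B` lies in one cycle and has a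
translate in the other one, so that `|B|` divides both `2y` and `m`.
-/

open Equiv Perm Function

section CycleLength

theorem minimalPeriod_eq_of_semiconj {α β : Type*} {f : α → β} {g : α → α} {h : β → β}
    (hf : Injective f) (hgh : Semiconj f g h) (x : α) :
    minimalPeriod h (f x) = minimalPeriod g x :=
  minimalPeriod_eq_minimalPeriod_iff.2 fun n => by
    rw [IsPeriodicPt, IsFixedPt, ← (hgh.iterate_right n).eq, hf.eq_iff]; rfl

variable {Ω : Type*} {σ : Perm Ω} {x y : Ω}

section Finite

variable [Finite Ω]

theorem sameCycle_of_step {Δ : Type*} {τ : Perm Δ} {f : Ω → Δ}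
    (hstep : ∀ x, τ.SameCycle (f x) (f (σ x))) (hxy : σ.SameCycle x y) :
    τ.SameCycle (f x) (f y) := by
  obtain ⟨n, rfl⟩ := hxy.exists_nat_pow_eq
  induction n with
  | zero => rfl
  | succ n ih =>
    rw [pow_succ', mul_apply]
    exact (ih (sameCycle_pow_right.2 (SameCycle.refl σ x))).trans (hstep _)

theorem sameCycle_of_semiconj {Δ : Type*} {τ : Perm Δ} {f : Ω → Δ}
    (hf : Semiconj f σ τ) (hxy : σ.SameCycle x y) : τ.SameCycle (f x) (f y) :=
  sameCycle_of_step (fun x => ⟨1, (hf x).symm⟩) hxy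

theorem minimalPeriod_pos (σ : Perm Ω) (x : Ω) : 0 < minimalPeriod σ x :=
  minimalPeriod_pos_of_mem_periodicPts (σ.injective.mem_periodicPts x)

end Finite

theorem minimalPeriod_eq_of_sameCycle (h : σ.SameCycle x y) :
    minimalPeriod σ x = minimalPeriod σ y := by
  obtain ⟨k, rfl⟩ := h
  exact (minimalPeriod_eq_of_semiconj (σ ^ k).injective
    (fun z => by rw [← mul_apply, ← mul_apply, (Commute.refl σ).zpow_left]) x).symm

variable [Fintype Ω] [DecidableEq Ω]

theorem minimalPeriod_eq_card_sameCycle (σ : Perm Ω) (x : Ω) :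
    minimalPeriod σ x = (Finset.univ.filter (σ.SameCycle x)).card := by
  classical
  have h := MulAction.minimalPeriod_eq_card (a := σ) (b := x)
  rw [show ((σ • ·) : Ω → Ω) = σ from rfl] at h
  rw [h, ← Set.toFinset_card]
  congr 1
  ext y
  simp only [Set.mem_toFinset, MulAction.mem_orbit_iff, Finset.mem_filter, Finset.mem_univ,
    true_and]
  constructor
  · rintro ⟨⟨_, k, rfl⟩, h⟩
    exact ⟨k, h⟩
  · rintro ⟨k, h⟩
    exact ⟨⟨_, k, rfl⟩, h⟩

theorem minimalPeriod_eq_card_support_cycleOf (h : σ x ≠ x) :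
    minimalPeriod σ x = (σ.cycleOf x).support.card := by
  rw [minimalPeriod_eq_card_sameCycle]
  congr 1
  ext y
  rw [Finset.mem_filter_univ, mem_support_cycleOf_iff' h]

end CycleLength

section FullCycleType

/-- The multiset in which every part `i` of `D` is repeated `i` times. For `D` the cycle type of a
permutation, it lists the cycle length of every point. -/
def spread (D : Multiset ℕ) : Multiset ℕ := D.bind fun i => Multiset.replicate i i

theorem spread_cons (i : ℕ) (D : Multiset ℕ) :
    spread (i ::ₘ D) = Multiset.replicate i i + spread D :=
  Multiset.cons_bind _ _ _

theorem spread_singleton (i : ℕ) : spread {i} = Multiset.replicate i i :=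
  Multiset.singleton_bind _ _

theorem spread_add (D E : Multiset ℕ) : spread (D + E) = spread D + spread E :=
  Multiset.add_bind _ _ _

theorem count_spread (D : Multiset ℕ) (i : ℕ) : (spread D).count i = i * D.count i := by
  induction D using Multiset.induction with
  | empty => simp [spread]
  | cons j D ih =>
    rw [spread_cons, Multiset.count_add, ih, Multiset.count_replicate, Multiset.count_cons]
    by_cases h : j = i
    · rw [if_pos h, if_pos h.symm, h, mul_add_one, add_comm]
    · rw [if_neg h, if_neg (Ne.symm h), zero_add, add_zero]

theorem spread_replicate (k i : ℕ) :
    spread (Multiset.replicate k i) = Multiset.replicate (k * i) i := by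
  ext j
  rw [count_spread, Multiset.count_replicate, Multiset.count_replicate]
  split_ifs with hj
  · rw [hj, mul_comm]
  · rfl

theorem spread_injOn : Set.InjOn spread {D | 0 ∉ D} := by
  intro D hD E hE h
  ext i
  rcases Nat.eq_zero_or_pos i with rfl | hi
  · rw [Multiset.count_eq_zero_of_notMem hD, Multiset.count_eq_zero_of_notMem hE]
  · exact Nat.eq_of_mul_eq_mul_left hi (by rw [← count_spread, h, count_spread])

variable {Ω : Type*} [Fintype Ω] [DecidableEq Ω] {σ : Perm Ω} {D : Multiset ℕ} {i : ℕ}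

theorem pos_of_mem_fullCycleType (hi : i ∈ fullCycleType σ) : 0 < i := by
  rcases Multiset.mem_add.1 hi with h | h
  · exact two_pos.trans_le (two_le_of_mem_cycleType h)
  · rw [Multiset.eq_of_mem_replicate h]
    exact one_pos

theorem sum_fullCycleType (σ : Perm Ω) : (fullCycleType σ).sum = Fintype.card Ω :=
  σ.partition.parts_sum

theorem map_minimalPeriod_support (σ : Perm Ω) :
    σ.support.val.map (minimalPeriod σ) = spread σ.cycleType := by
  have hmaps : ∀ x ∈ σ.support, σ.cycleOf x ∈ σ.cycleFactorsFinset := fun x hx =>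
    cycleOf_mem_cycleFactorsFinset_iff.2 hx
  calc σ.support.val.map (minimalPeriod σ)
      = ∑ x ∈ σ.support, {minimalPeriod σ x} := (Multiset.sum_map_singleton _).symm.trans (by
          rw [Multiset.map_map]; rfl)
    _ = ∑ c ∈ σ.cycleFactorsFinset,
          ∑ x ∈ σ.support with σ.cycleOf x = c, {minimalPeriod σ x} :=
        (Finset.sum_fiberwise_of_maps_to hmaps _).symm
    _ = ∑ c ∈ σ.cycleFactorsFinset, Multiset.replicate c.support.card c.support.card := by
        refine Finset.sum_congr rfl fun c hc => ?_
        have hfiber : {x ∈ σ.support | σ.cycleOf x = c} = c.support := by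
          ext x
          rw [Finset.mem_filter, eq_comm (b := c), eq_cycleOf_of_mem_cycleFactorsFinset_iff σ c hc,
            and_iff_right_of_imp fun hx => mem_cycleFactorsFinset_support_le hc hx]
        rw [hfiber, Finset.sum_congr rfl fun x hx => ?_, Finset.sum_const,
          Multiset.nsmul_singleton]
        rw [minimalPeriod_eq_card_support_cycleOf
          (mem_support.1 (mem_cycleFactorsFinset_support_le hc hx)), ← cycle_is_cycleOf hx hc]
    _ = spread σ.cycleType := by
        rw [spread, cycleType_def, Multiset.bind_map]; rfl

theorem map_minimalPeriod (σ : Perm Ω) :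
    Finset.univ.val.map (minimalPeriod σ) = spread (fullCycleType σ) := by
  have hfixed : σ.supportᶜ.val.map (minimalPeriod σ) =
      Multiset.replicate (Fintype.card Ω - σ.support.card) 1 := by
    rw [← Finset.card_compl, Multiset.eq_replicate, Multiset.card_map]
    refine ⟨rfl, fun i hi => ?_⟩
    obtain ⟨x, hx, rfl⟩ := Multiset.mem_map.1 hi
    exact minimalPeriod_eq_one_iff_isFixedPt.2 (notMem_support.1 (Finset.mem_compl.1 hx))
  rw [fullCycleType, spread_add, spread_replicate, mul_one, ← map_minimalPeriod_support, ← hfixed,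
    ← Multiset.map_add, ← Finset.disjUnion_val _ _ disjoint_compl_right,
    Finset.disjUnion_eq_union, Finset.union_compl]

theorem fullCycleType_eq_of_map_minimalPeriod (hD : 0 ∉ D)
    (h : Finset.univ.val.map (minimalPeriod σ) = spread D) : fullCycleType σ = D :=
  spread_injOn (fun h0 => (pos_of_mem_fullCycleType h0).false) hD (map_minimalPeriod σ ▸ h)

theorem mem_fullCycleType_iff : i ∈ fullCycleType σ ↔ ∃ x, minimalPeriod σ x = i := by
  have h : i ∈ spread (fullCycleType σ) ↔ i ∈ fullCycleType σ := by
    simp only [spread, Multiset.mem_bind, Multiset.mem_replicate]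
    exact ⟨fun ⟨_, hj, _, h⟩ => h ▸ hj, fun hi => ⟨i, hi, (pos_of_mem_fullCycleType hi).ne', rfl⟩⟩
  rw [← h, ← map_minimalPeriod]
  simp

end FullCycleType

section Transport

variable {Ω Ω' : Type*} [Fintype Ω] [DecidableEq Ω] [Fintype Ω'] [DecidableEq Ω']

theorem fullCycleType_optionCongr (σ : Perm Ω) :
    fullCycleType (optionCongr σ) = 1 ::ₘ fullCycleType σ := by
  have hone : minimalPeriod (optionCongr σ) none = 1 := minimalPeriod_eq_one_iff_isFixedPt.2 rfl
  have hsome (x : Ω) : minimalPeriod (optionCongr σ) (some x) = minimalPeriod σ x :=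
    minimalPeriod_eq_of_semiconj (Option.some_injective Ω) (fun _ => rfl) x
  refine fullCycleType_eq_of_map_minimalPeriod ?_ ?_
  · simp only [Multiset.mem_cons, zero_ne_one, false_or]
    exact fun h => (pos_of_mem_fullCycleType h).false
  · rw [spread_cons, ← map_minimalPeriod σ, univ_option]
    simp [hone, hsome, Finset.insertNone]

theorem fullCycleType_sumCongr (σ : Perm Ω) (τ : Perm Ω') :
    fullCycleType (Perm.sumCongr σ τ) = fullCycleType σ + fullCycleType τ := by
  have hinl (x : Ω) : minimalPeriod (Perm.sumCongr σ τ) (Sum.inl x) = minimalPeriod σ x :=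
    minimalPeriod_eq_of_semiconj Sum.inl_injective (fun _ => rfl) x
  have hinr (x : Ω') : minimalPeriod (Perm.sumCongr σ τ) (Sum.inr x) = minimalPeriod τ x :=
    minimalPeriod_eq_of_semiconj Sum.inr_injective (fun _ => rfl) x
  refine fullCycleType_eq_of_map_minimalPeriod ?_ ?_
  · rw [Multiset.mem_add]
    rintro (h | h) <;> exact (pos_of_mem_fullCycleType h).false
  · rw [spread_add, ← map_minimalPeriod σ, ← map_minimalPeriod τ, ← Finset.univ_disjSum_univ]
    simp [Finset.disjSum, Multiset.disjSum, hinl, hinr]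

theorem fullCycleType_permCongr (e : Ω ≃ Ω') (σ : Perm Ω) :
    fullCycleType (e.permCongr σ) = fullCycleType σ := by
  refine fullCycleType_eq_of_map_minimalPeriod
    (fun h => (pos_of_mem_fullCycleType h).false) ?_
  rw [← map_minimalPeriod σ, ← Finset.univ_map_equiv_to_embedding e, Finset.map_val,
    Multiset.map_map]
  refine Multiset.map_congr rfl fun x _ => ?_
  exact minimalPeriod_eq_of_semiconj e.injective (fun y => by simp) x

theorem fullCycleType_one : fullCycleType (1 : Perm Ω) = Multiset.replicate (Fintype.card Ω) 1 := by
  simp [fullCycleType]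

end Transport

section Root

variable {Ω : Type*} [Fintype Ω] [DecidableEq Ω]

/-- The cycle type of the `k`-th power of a permutation of cycle type `D`. -/
def powCycleType (k : ℕ) (D : Multiset ℕ) : Multiset ℕ :=
  D.bind fun i => Multiset.replicate (i.gcd k) (i / i.gcd k)

theorem sum_powCycleType (k : ℕ) (D : Multiset ℕ) : (powCycleType k D).sum = D.sum := by
  simp only [powCycleType, Multiset.sum_bind, Multiset.sum_replicate, smul_eq_mul,
    Nat.mul_div_cancel' (Nat.gcd_dvd_left _ k), Multiset.map_id']

theorem spread_powCycleType (k : ℕ) (D : Multiset ℕ) :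
    spread (powCycleType k D) = (spread D).map fun i => i / i.gcd k := by
  rw [spread, powCycleType, Multiset.bind_assoc, spread, Multiset.map_bind]
  refine Multiset.bind_congr fun i _ => ?_
  rw [Multiset.map_replicate, ← spread, spread_replicate,
    Nat.mul_div_cancel' (Nat.gcd_dvd_left i k)]

theorem fullCycleType_pow {k : ℕ} (hk : k ≠ 0) (σ : Perm Ω) :
    fullCycleType (σ ^ k) = powCycleType k (fullCycleType σ) := by
  refine fullCycleType_eq_of_map_minimalPeriod ?_ ?_
  · simp only [powCycleType, Multiset.mem_bind, Multiset.mem_replicate, not_exists, not_and]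
    intro i hi _ h0
    exact (Nat.div_pos (Nat.gcd_le_left k (pos_of_mem_fullCycleType hi))
      (Nat.gcd_pos_of_pos_right i (Nat.pos_of_ne_zero hk))).ne h0
  · rw [spread_powCycleType, ← map_minimalPeriod, Multiset.map_map]
    refine Multiset.map_congr rfl fun x _ => ?_
    rw [comp_apply, ← minimalPeriod_iterate_eq_div_gcd hk, iterate_eq_pow]

theorem isConj_iff_fullCycleType_eq {σ τ : Perm Ω} :
    IsConj σ τ ↔ fullCycleType σ = fullCycleType τ :=
  partition_eq_of_isConj.trans Nat.Partition.ext_iff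

theorem exists_fullCycleType_eq {D : Multiset ℕ} (hD : ∀ i ∈ D, 0 < i)
    (hsum : D.sum = Fintype.card Ω) : ∃ σ : Perm Ω, fullCycleType σ = D := by
  have hones : D.filter (¬ 2 ≤ ·) = Multiset.replicate (D.filter (¬ 2 ≤ ·)).card 1 :=
    Multiset.eq_replicate_card.2 fun i hi => by
      obtain ⟨hiD, hi2⟩ := Multiset.mem_filter.1 hi
      have := hD i hiD
      lia
  have hadd : (D.filter (2 ≤ ·)).sum + (D.filter (¬ 2 ≤ ·)).card = Fintype.card Ω := by
    have hsum_ones : (D.filter (¬ 2 ≤ ·)).sum = (D.filter (¬ 2 ≤ ·)).card :=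
      (congrArg Multiset.sum hones).trans (by simp)
    rw [← hsum_ones, ← Multiset.sum_add, Multiset.filter_add_not, hsum]
  obtain ⟨σ, hσ⟩ := (exists_with_cycleType_iff Ω (m := D.filter (2 ≤ ·))).2
    ⟨(Nat.le_add_right _ _).trans_eq hadd, fun i hi => (Multiset.mem_filter.1 hi).2⟩
  refine ⟨σ, ?_⟩
  rw [fullCycleType, ← sum_cycleType, hσ, ← hadd, Nat.add_sub_cancel_left, ← hones,
    Multiset.filter_add_not]

theorem exists_pow_eq_of_fullCycleType {c : Perm Ω} {k : ℕ} {D : Multiset ℕ} (hk : k ≠ 0)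
    (hD : ∀ i ∈ D, 0 < i) (hc : fullCycleType c = powCycleType k D) :
    ∃ ω : Perm Ω, ω ^ k = c ∧ fullCycleType ω = D := by
  obtain ⟨ω, hω⟩ := exists_fullCycleType_eq (Ω := Ω) hD
    (by rw [← sum_powCycleType k, ← hc, sum_fullCycleType])
  obtain ⟨g, hg⟩ := isConj_iff.1 (isConj_iff_fullCycleType_eq.2
    ((fullCycleType_pow hk ω).trans (hω ▸ hc.symm)))
  exact ⟨g * ω * g⁻¹, by rw [conj_pow, hg],
    (isConj_iff_fullCycleType_eq.1 (isConj_iff.2 ⟨g, rfl⟩)).symm.trans hω⟩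

end Root

section SameCycle

variable {Ω : Type*} [Fintype Ω] [DecidableEq Ω] {σ : Perm Ω} {u v z : Ω} {a : ℕ} {A : Multiset ℕ}

theorem map_minimalPeriod_sameCycle (σ : Perm Ω) (u : Ω) :
    (Finset.univ.filter (σ.SameCycle u)).val.map (minimalPeriod σ) =
      Multiset.replicate (minimalPeriod σ u) (minimalPeriod σ u) := by
  rw [Multiset.eq_replicate, Multiset.card_map, minimalPeriod_eq_card_sameCycle]
  refine ⟨rfl, fun i hi => ?_⟩
  obtain ⟨x, hx, rfl⟩ := Multiset.mem_map.1 hi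
  rw [← minimalPeriod_eq_of_sameCycle (Finset.mem_filter.1 hx).2,
    ← minimalPeriod_eq_card_sameCycle]

theorem map_minimalPeriod_not_sameCycle (h : fullCycleType σ = minimalPeriod σ u ::ₘ A) :
    (Finset.univ.filter (¬ σ.SameCycle u ·)).val.map (minimalPeriod σ) = spread A := by
  have hsplit := map_minimalPeriod σ
  rw [← Multiset.filter_add_not (σ.SameCycle u) Finset.univ.val, Multiset.map_add,
    ← Finset.filter_val, map_minimalPeriod_sameCycle, h, spread_cons] at hsplit
  exact add_left_cancel hsplit

theorem fullCycleType_eq_pair (hcover : ∀ z, σ.SameCycle u z ∨ σ.SameCycle v z)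
    (huv : ¬ σ.SameCycle u v) :
    fullCycleType σ = {minimalPeriod σ u, minimalPeriod σ v} := by
  have hcompl : Finset.univ.filter (¬ σ.SameCycle u ·) = Finset.univ.filter (σ.SameCycle v) := by
    refine Finset.filter_congr fun z _ => ⟨(hcover z).resolve_left, fun hvz huz => huv ?_⟩
    exact huz.trans hvz.symm
  refine fullCycleType_eq_of_map_minimalPeriod ?_ ?_
  · simp [(minimalPeriod_pos σ _).ne]
  · rw [← Multiset.filter_add_not (σ.SameCycle u) Finset.univ.val, Multiset.map_add,
      ← Finset.filter_val, ← Finset.filter_val, hcompl, map_minimalPeriod_sameCycle,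
      map_minimalPeriod_sameCycle, Multiset.insert_eq_cons, spread_cons, spread_singleton]

theorem exists_not_sameCycle (h : fullCycleType σ = minimalPeriod σ u ::ₘ A) (ha : a ∈ A) :
    ∃ s, ¬ σ.SameCycle u s ∧ minimalPeriod σ s = a := by
  have ha0 : 0 < a := pos_of_mem_fullCycleType (h ▸ Multiset.mem_cons_of_mem ha)
  have hmem : a ∈ spread A :=
    Multiset.mem_bind.2 ⟨a, ha, Multiset.mem_replicate.2 ⟨ha0.ne', rfl⟩⟩
  rw [← map_minimalPeriod_not_sameCycle h] at hmem
  simpa using hmem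

theorem sameCycle_of_count_eq_one (hcount : (fullCycleType σ).count (minimalPeriod σ u) = 1)
    (hz : minimalPeriod σ z = minimalPeriod σ u) : σ.SameCycle u z := by
  obtain ⟨A, hA⟩ := Multiset.exists_cons_of_mem
    (mem_fullCycleType_iff.2 ⟨u, rfl⟩ : minimalPeriod σ u ∈ fullCycleType σ)
  by_contra hne
  have hmem : minimalPeriod σ u ∈ spread A := by
    rw [← map_minimalPeriod_not_sameCycle hA]
    exact Multiset.mem_map.2 ⟨z, by simpa using hne, hz⟩
  have hA0 : minimalPeriod σ u ∉ A := by
    simpa [hA] using hcount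
  obtain ⟨b, hb, hub⟩ := Multiset.mem_bind.1 hmem
  exact hA0 (Multiset.eq_of_mem_replicate hub ▸ hb)

end SameCycle

section InsertPoint

variable {Γ : Type*} [DecidableEq Γ] {σ : Perm Γ} {s x : Γ}

/-- The permutation of `Option Γ` obtained from `σ` by inserting the new point `none` just before
`s` in the cycle of `s`. -/
def insertPoint (σ : Perm Γ) (s : Γ) : Perm (Option Γ) := swap none (some s) * optionCongr σ

theorem insertPoint_mul_optionCongr (σ τ : Perm Γ) (s : Γ) :
    insertPoint σ s * optionCongr τ = insertPoint (σ * τ) s := by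
  ext z; cases z <;> rfl

theorem optionCongr_mul_insertPoint (σ τ : Perm Γ) (s : Γ) :
    optionCongr σ * insertPoint τ s = insertPoint (σ * τ) (σ s) := by
  have hswap : optionCongr σ * swap none (some s) = swap none (some (σ s)) * optionCongr σ := by
    rw [mul_swap_eq_swap_mul]; rfl
  rw [insertPoint, ← mul_assoc, hswap, mul_assoc, insertPoint]
  congr 1
  ext z; cases z <;> rfl

theorem insertPoint_apply_none (σ : Perm Γ) (s : Γ) : insertPoint σ s none = some s :=
  swap_apply_left none (some s)

theorem insertPoint_apply_some (σ : Perm Γ) (s x : Γ) :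
    insertPoint σ s (some x) = if σ x = s then none else some (σ x) := by
  simp [insertPoint, swap_apply_def]

theorem sameCycle_insertPoint_iff [Finite Γ] {z w : Option Γ} :
    (insertPoint σ s).SameCycle z w ↔ σ.SameCycle (z.getD s) (w.getD s) := by
  have hnone : (insertPoint σ s).SameCycle none (some s) :=
    ⟨1, by rw [zpow_one, insertPoint_apply_none]⟩
  have hsome (z : Option Γ) : (insertPoint σ s).SameCycle z (some (z.getD s)) := by
    cases z with
    | none => exact hnone
    | some x => rfl
  constructor
  · refine sameCycle_of_step (f := (Option.getD · s)) fun z => ?_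
    cases z with
    | none => rw [insertPoint_apply_none]; rfl
    | some x =>
      rw [insertPoint_apply_some]
      split_ifs with h
      · exact ⟨1, h⟩
      · exact ⟨1, rfl⟩
  · refine fun h => (hsome z).trans (.trans ?_ (hsome w).symm)
    refine sameCycle_of_step (f := some) (fun x => ?_) h
    rcases eq_or_ne (σ x) s with hx | hx
    · rw [hx]
      exact .trans ⟨1, by rw [zpow_one, insertPoint_apply_some, if_pos hx]⟩ hnone
    · exact ⟨1, by rw [zpow_one, insertPoint_apply_some, if_neg hx]⟩

theorem minimalPeriod_insertPoint [Fintype Γ] (σ : Perm Γ) (s : Γ) (z : Option Γ) :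
    minimalPeriod (insertPoint σ s) z =
      (if σ.SameCycle (z.getD s) s then 1 else 0) + minimalPeriod σ (z.getD s) := by
  simp only [minimalPeriod_eq_card_sameCycle, Finset.card_filter, Fintype.sum_option,
    sameCycle_insertPoint_iff, Option.getD_none, Option.getD_some]

theorem minimalPeriod_insertPoint_of_sameCycle [Finite Γ] (h : σ.SameCycle x s) :
    minimalPeriod (insertPoint σ s) (some x) = minimalPeriod σ x + 1 := by
  have := Fintype.ofFinite Γ
  rw [minimalPeriod_insertPoint, Option.getD_some, if_pos h, add_comm]

theorem minimalPeriod_insertPoint_of_not_sameCycle [Finite Γ] (h : ¬ σ.SameCycle x s) :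
    minimalPeriod (insertPoint σ s) (some x) = minimalPeriod σ x := by
  have := Fintype.ofFinite Γ
  rw [minimalPeriod_insertPoint, Option.getD_some, if_neg h, zero_add]

theorem fullCycleType_insertPoint [Fintype Γ] {A : Multiset ℕ}
    (h : fullCycleType σ = minimalPeriod σ s ::ₘ A) :
    fullCycleType (insertPoint σ s) = (minimalPeriod σ s + 1) ::ₘ A := by
  have hA : 0 ∉ A := fun h0 =>
    (pos_of_mem_fullCycleType (h ▸ Multiset.mem_cons_of_mem h0)).false
  refine fullCycleType_eq_of_map_minimalPeriod (by simpa using hA) ?_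
  have hnone : minimalPeriod (insertPoint σ s) none = minimalPeriod σ s + 1 := by
    rw [minimalPeriod_insertPoint, Option.getD_none, if_pos (.refl σ s), add_comm]
  have hsame : (Finset.univ.filter (σ.SameCycle s)).val.map
      (fun x => minimalPeriod (insertPoint σ s) (some x)) =
        Multiset.replicate (minimalPeriod σ s) (minimalPeriod σ s + 1) := by
    rw [← Multiset.map_replicate (· + 1), ← map_minimalPeriod_sameCycle, Multiset.map_map]
    exact Multiset.map_congr rfl fun x hx =>
      minimalPeriod_insertPoint_of_sameCycle (Finset.mem_filter.1 hx).2.symm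
  have hother : (Finset.univ.filter (¬ σ.SameCycle s ·)).val.map
      (fun x => minimalPeriod (insertPoint σ s) (some x)) = spread A := by
    rw [← map_minimalPeriod_not_sameCycle h]
    exact Multiset.map_congr rfl fun x hx =>
      minimalPeriod_insertPoint_of_not_sameCycle fun hxs => (Finset.mem_filter.1 hx).2 hxs.symm
  rw [spread_cons, ← hother, Multiset.replicate_succ, ← hsame, Multiset.cons_add,
    ← Multiset.map_add, Finset.filter_val, Finset.filter_val, Multiset.filter_add_not, ← hnone]
  simp [univ_option, Finset.insertNone]

end InsertPoint

section TwoFaceMap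

variable {Γ : Type*} {σ γ α β : Perm Γ} {s p o : Γ}

/-- Every cycle of `σ` meets the cycle of `o` under `γ`. -/
def Meets (σ γ : Perm Γ) (o : Γ) : Prop := ∀ z, ∃ t, σ.SameCycle z t ∧ γ.SameCycle o t

/-- A pair of permutations seen as a bipartite map: the points are edges, the cycles of `α` are
black vertices, the cycles of `β` are white vertices and the cycles of `α * β` are faces. There are
exactly two faces, the inner one through `p` and the outer one through `o`, and every black vertex
lies on the outer face. -/
structure IsTwoFaceMap (α β : Perm Γ) (p o : Γ) : Prop where
  cover : ∀ z, (α * β).SameCycle p z ∨ (α * β).SameCycle o z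
  not_sameCycle : ¬ (α * β).SameCycle p o
  meets : Meets α (α * β) o

section Finite

variable [Finite Γ] [DecidableEq Γ]

theorem Meets.insertPoint_insertPoint (h : Meets σ γ o) (s t : Γ) :
    Meets (insertPoint σ s) (insertPoint γ t) (some o) := fun z =>
  let ⟨u, hzu, hou⟩ := h (z.getD s)
  ⟨some u, sameCycle_insertPoint_iff.2 hzu, sameCycle_insertPoint_iff.2 hou⟩

theorem Meets.optionCongr_insertPoint (h : Meets σ γ o) (hs : γ.SameCycle o s) :
    Meets (optionCongr σ) (insertPoint γ s) (some o)
  | none => ⟨none, .refl _ _, sameCycle_insertPoint_iff.2 hs⟩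
  | some z =>
    let ⟨u, hzu, hou⟩ := h z
    ⟨some u, sameCycle_of_semiconj (fun _ => rfl) hzu, sameCycle_insertPoint_iff.2 hou⟩

theorem IsTwoFaceMap.insertPoint_left (h : IsTwoFaceMap α β p o) (s : Γ) :
    IsTwoFaceMap (insertPoint α s) (optionCongr β) (some p) (some o) := by
  constructor <;> rw [insertPoint_mul_optionCongr]
  · exact fun z => (h.cover (z.getD s)).imp sameCycle_insertPoint_iff.2 sameCycle_insertPoint_iff.2
  · exact fun hpo => h.not_sameCycle (sameCycle_insertPoint_iff.1 hpo)
  · exact h.meets.insertPoint_insertPoint s s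

theorem IsTwoFaceMap.insertPoint_right (h : IsTwoFaceMap α β p o) (hs : (α * β).SameCycle o (α s)) :
    IsTwoFaceMap (optionCongr α) (insertPoint β s) (some p) (some o) := by
  constructor <;> rw [optionCongr_mul_insertPoint]
  · exact fun z => (h.cover (z.getD _)).imp sameCycle_insertPoint_iff.2 sameCycle_insertPoint_iff.2
  · exact fun hpo => h.not_sameCycle (sameCycle_insertPoint_iff.1 hpo)
  · exact h.meets.optionCongr_insertPoint hs

theorem IsTwoFaceMap.minimalPeriod_insertPoint_inner (h : IsTwoFaceMap α β p o)
    (hs : (α * β).SameCycle o s) :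
    minimalPeriod (insertPoint (α * β) s) (some p) = minimalPeriod (α * β) p :=
  minimalPeriod_insertPoint_of_not_sameCycle fun hps => h.not_sameCycle (hps.trans hs.symm)

end Finite

theorem IsTwoFaceMap.fullCycleType_mul [Fintype Γ] [DecidableEq Γ] (h : IsTwoFaceMap α β p o) :
    fullCycleType (α * β) = {minimalPeriod (α * β) p, minimalPeriod (α * β) o} :=
  fullCycleType_eq_pair h.cover h.not_sameCycle

end TwoFaceMap

section Passport

variable {a a' b i m : ℕ} {A B : Multiset ℕ}

/-- The numerical data of a two-face map `(α, β)`: `a` is the degree of the black vertex at `p`, `A`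
lists the degrees of the other black vertices, `B` lists the degrees of the white vertices, and `i`
and `m` are the lengths of the inner and of the outer face. -/
structure HasPassport {Γ : Type*} [Fintype Γ] [DecidableEq Γ] (α β : Perm Γ) (p o : Γ)
    (a : ℕ) (A B : Multiset ℕ) (i m : ℕ) : Prop where
  fullCycleType_left : fullCycleType α = a ::ₘ A
  minimalPeriod_left : minimalPeriod α p = a
  fullCycleType_right : fullCycleType β = B
  minimalPeriod_inner : minimalPeriod (α * β) p = i
  minimalPeriod_outer : minimalPeriod (α * β) o = m

/-- Some two-face map has the given degrees and face lengths. -/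
def ExistsTwoFaceMap (a : ℕ) (A B : Multiset ℕ) (i m : ℕ) : Prop :=
  ∃ (Γ : Type) (_ : Fintype Γ) (_ : DecidableEq Γ) (α β : Perm Γ) (p o : Γ),
    IsTwoFaceMap α β p o ∧ HasPassport α β p o a A B i m

/-- Some two-face map with all vertices, black and white, on the outer face has the given degrees
and face lengths. -/
def ExistsOpenTwoFaceMap (a : ℕ) (A B : Multiset ℕ) (i m : ℕ) : Prop :=
  ∃ (Γ : Type) (_ : Fintype Γ) (_ : DecidableEq Γ) (α β : Perm Γ) (p o : Γ),
    IsTwoFaceMap α β p o ∧ Meets β (α * β) o ∧ HasPassport α β p o a A B i m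

theorem ExistsOpenTwoFaceMap.existsTwoFaceMap (h : ExistsOpenTwoFaceMap a A B i m) :
    ExistsTwoFaceMap a A B i m :=
  let ⟨Γ, _, _, α, β, p, o, hmap, _, hpass⟩ := h
  ⟨Γ, _, _, α, β, p, o, hmap, hpass⟩

theorem ExistsTwoFaceMap.add_inner_leaf (h : ExistsTwoFaceMap a A B i m) :
    ExistsTwoFaceMap (a + 1) A (1 ::ₘ B) (i + 1) m := by
  obtain ⟨Γ, _, _, α, β, p, o, hmap, hα, rfl, rfl, rfl, rfl⟩ := h
  refine ⟨Option Γ, inferInstance, inferInstance, insertPoint α p, optionCongr β, some p, some o,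
    hmap.insertPoint_left p, ?_⟩
  constructor
  · exact fullCycleType_insertPoint hα
  · exact minimalPeriod_insertPoint_of_sameCycle (.refl α p)
  · exact fullCycleType_optionCongr β
  · rw [insertPoint_mul_optionCongr]
    exact minimalPeriod_insertPoint_of_sameCycle (.refl _ p)
  · rw [insertPoint_mul_optionCongr]
    exact minimalPeriod_insertPoint_of_not_sameCycle fun hop => hmap.not_sameCycle hop.symm

namespace ExistsOpenTwoFaceMap

theorem add_leaf_root (h : ExistsOpenTwoFaceMap a A B i m) :
    ExistsOpenTwoFaceMap (a + 1) A (1 ::ₘ B) i (m + 1) := by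
  obtain ⟨Γ, _, _, α, β, p, o, hmap, hopen, hα, rfl, rfl, rfl, rfl⟩ := h
  obtain ⟨s, hps, hos⟩ := hmap.meets p
  refine ⟨Option Γ, inferInstance, inferInstance, insertPoint α s, optionCongr β, some p, some o,
    hmap.insertPoint_left s, ?_, ?_⟩
  · rw [insertPoint_mul_optionCongr]
    exact hopen.optionCongr_insertPoint hos
  constructor
  · rw [minimalPeriod_eq_of_sameCycle hps] at hα ⊢
    exact fullCycleType_insertPoint hα
  · exact minimalPeriod_insertPoint_of_sameCycle hps
  · exact fullCycleType_optionCongr β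
  · rw [insertPoint_mul_optionCongr]
    exact hmap.minimalPeriod_insertPoint_inner hos
  · rw [insertPoint_mul_optionCongr]
    exact minimalPeriod_insertPoint_of_sameCycle hos

theorem add_leaf_black (h : ExistsOpenTwoFaceMap a (a' ::ₘ A) B i m) :
    ExistsOpenTwoFaceMap a ((a' + 1) ::ₘ A) (1 ::ₘ B) i (m + 1) := by
  obtain ⟨Γ, _, _, α, β, p, o, hmap, hopen, hα, rfl, rfl, rfl, rfl⟩ := h
  obtain ⟨r, hpr, rfl⟩ := exists_not_sameCycle hα (Multiset.mem_cons_self a' A)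
  obtain ⟨s, hrs, hos⟩ := hmap.meets r
  refine ⟨Option Γ, inferInstance, inferInstance, insertPoint α s, optionCongr β, some p, some o,
    hmap.insertPoint_left s, ?_, ?_⟩
  · rw [insertPoint_mul_optionCongr]
    exact hopen.optionCongr_insertPoint hos
  constructor
  · rw [Multiset.cons_swap, minimalPeriod_eq_of_sameCycle hrs] at hα ⊢
    exact fullCycleType_insertPoint hα
  · exact minimalPeriod_insertPoint_of_not_sameCycle fun hps => hpr (hps.trans hrs.symm)
  · exact fullCycleType_optionCongr β
  · rw [insertPoint_mul_optionCongr]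
    exact hmap.minimalPeriod_insertPoint_inner hos
  · rw [insertPoint_mul_optionCongr]
    exact minimalPeriod_insertPoint_of_sameCycle hos

theorem add_leaf_white (h : ExistsOpenTwoFaceMap a A (b ::ₘ B) i m) :
    ExistsOpenTwoFaceMap a (1 ::ₘ A) ((b + 1) ::ₘ B) i (m + 1) := by
  obtain ⟨Γ, _, _, α, β, p, o, hmap, hopen, hα, rfl, hβ, rfl, rfl⟩ := h
  obtain ⟨r, rfl⟩ := mem_fullCycleType_iff.1 (hβ ▸ Multiset.mem_cons_self b B)
  obtain ⟨t, hrt, hot⟩ := hopen r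
  have hrs : β.SameCycle r (β t) := sameCycle_apply_right.2 hrt
  have hos : (α * β).SameCycle o (α (β t)) := sameCycle_apply_right.2 hot
  refine ⟨Option Γ, inferInstance, inferInstance, optionCongr α, insertPoint β (β t), some p,
    some o, hmap.insertPoint_right hos, ?_, ?_⟩
  · rw [optionCongr_mul_insertPoint]
    exact hopen.insertPoint_insertPoint _ _
  constructor
  · rw [fullCycleType_optionCongr, hα, Multiset.cons_swap]
  · exact minimalPeriod_eq_of_semiconj (Option.some_injective Γ) (fun _ => rfl) p
  · rw [minimalPeriod_eq_of_sameCycle hrs] at hβ ⊢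
    exact fullCycleType_insertPoint hβ
  · rw [optionCongr_mul_insertPoint]
    exact hmap.minimalPeriod_insertPoint_inner hos
  · rw [optionCongr_mul_insertPoint]
    exact minimalPeriod_insertPoint_of_sameCycle hos

end ExistsOpenTwoFaceMap

theorem ExistsTwoFaceMap.add_inner_leaves (h : ExistsTwoFaceMap a A B i m) (j : ℕ) :
    ExistsTwoFaceMap (a + j) A (Multiset.replicate j 1 + B) (i + j) m := by
  induction j with
  | zero => simpa using h
  | succ j ih => simpa [Multiset.replicate_succ, ← add_assoc] using ih.add_inner_leaf

theorem ExistsOpenTwoFaceMap.add_leaves_black (h : ExistsOpenTwoFaceMap a (a' ::ₘ A) B i m)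
    (j : ℕ) :
    ExistsOpenTwoFaceMap a ((a' + j) ::ₘ A) (Multiset.replicate j 1 + B) i (m + j) := by
  induction j with
  | zero => simpa using h
  | succ j ih => simpa [Multiset.replicate_succ, ← add_assoc] using ih.add_leaf_black

theorem existsOpenTwoFaceMap_digon : ExistsOpenTwoFaceMap 2 0 {2} 1 1 := by
  have hswap : fullCycleType (swap (0 : Fin 2) 1) = {2} :=
    fullCycleType_eq_of_map_minimalPeriod (by decide) (by
      simp only [minimalPeriod_eq_card_sameCycle]; decide)
  refine ⟨Fin 2, inferInstance, inferInstance, swap 0 1, swap 0 1, 0, 1, ⟨?_, ?_, ?_⟩, ?_,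
    hswap, ?_, hswap, ?_, ?_⟩
  any_goals rw [minimalPeriod_eq_card_sameCycle]
  all_goals (try unfold Meets); decide

theorem existsOpenTwoFaceMap_square : ExistsOpenTwoFaceMap 2 {2} {2, 2} 2 2 := by
  let α : Perm (Fin 4) := swap 0 1 * swap 2 3
  let β : Perm (Fin 4) := swap 0 2 * swap 1 3
  have hα : fullCycleType α = {2, 2} :=
    fullCycleType_eq_of_map_minimalPeriod (by decide) (by
      simp only [minimalPeriod_eq_card_sameCycle]; decide)
  have hβ : fullCycleType β = {2, 2} :=
    fullCycleType_eq_of_map_minimalPeriod (by decide) (by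
      simp only [minimalPeriod_eq_card_sameCycle]; decide)
  refine ⟨Fin 4, inferInstance, inferInstance, α, β, 0, 1, ⟨?_, ?_, ?_⟩, ?_, hα, ?_, hβ, ?_, ?_⟩
  any_goals rw [minimalPeriod_eq_card_sameCycle]
  all_goals (try unfold Meets); decide

end Passport

section Graft

/-- Starting from a black and a white root, edges ending in a new leaf can be attached one at a time
so that the two roots gain degrees `e` and `f` and the new black and white vertices end up with the
degrees listed in `A` and `B`. -/
inductive IsGraft : ℕ → ℕ → Multiset ℕ → Multiset ℕ → Prop
  | zero : IsGraft 0 0 0 0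
  | add_leaf_black_root {e f : ℕ} {A B : Multiset ℕ} (h : IsGraft e f A B) :
      IsGraft (e + 1) f A (1 ::ₘ B)
  | add_leaf_white_root {e f : ℕ} {A B : Multiset ℕ} (h : IsGraft e f A B) :
      IsGraft e (f + 1) (1 ::ₘ A) B
  | add_leaf_black {e f a : ℕ} {A B : Multiset ℕ} (h : IsGraft e f (a ::ₘ A) B) :
      IsGraft e f ((a + 1) ::ₘ A) (1 ::ₘ B)
  | add_leaf_white {e f b : ℕ} {A B : Multiset ℕ} (h : IsGraft e f A (b ::ₘ B)) :
      IsGraft e f (1 ::ₘ A) ((b + 1) ::ₘ B)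

variable {e f : ℕ} {A B : Multiset ℕ}

theorem IsGraft.symm (h : IsGraft e f A B) : IsGraft f e B A := by
  induction h with
  | zero => exact .zero
  | add_leaf_black_root _ ih => exact ih.add_leaf_white_root
  | add_leaf_white_root _ ih => exact ih.add_leaf_black_root
  | add_leaf_black _ ih => exact ih.add_leaf_white
  | add_leaf_white _ ih => exact ih.add_leaf_black

theorem two_mul_card_le_sum {D : Multiset ℕ} (h0 : 0 ∉ D) (h1 : 1 ∉ D) :
    2 * D.card ≤ D.sum := by
  have h2 : ∀ i ∈ D, 2 ≤ i := fun i hi => by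
    have := ne_of_mem_of_not_mem hi h0
    have := ne_of_mem_of_not_mem hi h1
    omega
  simpa [mul_comm] using Multiset.card_nsmul_le_sum h2

theorem sum_eq_card_of_lt_two {D : Multiset ℕ} (h0 : 0 ∉ D) (h2 : ∀ i ∈ D, i < 2) :
    D.sum = D.card := by
  have hD : D = Multiset.replicate D.card 1 := Multiset.eq_replicate_card.2 fun i hi => by
    have := ne_of_mem_of_not_mem hi h0
    have := h2 i hi
    omega
  simpa using congrArg Multiset.sum hD

-- The counts say that the grafted edges form trees: each edge brings one new vertex, and has one
-- black and one white end.
theorem isGraft_of_sum_eq (hA : 0 ∉ A) (hB : 0 ∉ B) (hroot : A.card + B.card = 0 ∨ 0 < e ∨ 0 < f)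
    (he : e + A.sum = A.card + B.card) (hf : f + B.sum = A.card + B.card) : IsGraft e f A B := by
  induction hk : A.card + B.card generalizing e f A B with
  | zero =>
    obtain ⟨rfl, rfl⟩ : A = 0 ∧ B = 0 := by simpa using hk
    obtain ⟨rfl, rfl⟩ : e = 0 ∧ f = 0 := ⟨by simpa using he, by simpa using hf⟩
    exact .zero
  | succ k ih =>
    wlog h1 : 1 ∈ B generalizing e f A B
    · refine (this hB hA (by omega) (by omega) (by omega) (by omega) ?_).symm
      by_contra hA1
      have := two_mul_card_le_sum hA hA1
      have := two_mul_card_le_sum hB h1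
      omega
    obtain ⟨B, rfl⟩ := Multiset.exists_cons_of_mem h1
    rw [Multiset.mem_cons, not_or] at hB
    rw [Multiset.card_cons, Multiset.sum_cons] at *
    by_cases h2 : ∃ a ∈ A, 2 ≤ a
    · obtain ⟨a, ha, h2⟩ := h2
      obtain ⟨A, rfl⟩ := Multiset.exists_cons_of_mem ha
      obtain ⟨a, rfl⟩ := Nat.exists_eq_add_of_le' h2
      have hA' : 0 ∉ (a + 1) ::ₘ A := by simpa using hA
      simp only [Multiset.card_cons, Multiset.sum_cons] at *
      refine .add_leaf_black (ih hA' hB.2 ?_ ?_ ?_ ?_) <;>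
        simp only [Multiset.card_cons, Multiset.sum_cons] <;> omega
    · have hA1 : A.sum = A.card := sum_eq_card_of_lt_two hA (by simpa using h2)
      obtain ⟨e, rfl⟩ : ∃ e', e = e' + 1 := Nat.exists_eq_succ_of_ne_zero (by omega)
      have hB0 : B.card = 0 → B.sum = 0 := fun h => by simp [Multiset.card_eq_zero.1 h]
      exact .add_leaf_black_root (ih hA hB.2 (by omega) (by omega) (by omega) (by omega))

end Graft

section Existence

variable {a b e f i j m x y z : ℕ} {A A₀ B B₀ R : Multiset ℕ}

theorem ExistsOpenTwoFaceMap.graft (h : ExistsOpenTwoFaceMap a A₀ (b ::ₘ B₀) i m)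
    (hg : IsGraft e f A B) :
    ExistsOpenTwoFaceMap (a + e) (A + A₀) ((b + f) ::ₘ (B + B₀)) i (m + (A.card + B.card)) := by
  induction hg with
  | zero => simpa using h
  | add_leaf_black_root _ ih =>
    simpa [← add_assoc, Multiset.cons_swap] using ih.add_leaf_root
  | add_leaf_white_root _ ih =>
    simpa [← add_assoc, add_right_comm] using ih.add_leaf_white
  | add_leaf_black _ ih =>
    simp only [Multiset.cons_add, Multiset.card_cons] at ih ⊢
    simpa [← add_assoc, add_right_comm, Multiset.cons_swap] using ih.add_leaf_black
  | add_leaf_white _ ih =>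
    simp only [Multiset.cons_add, Multiset.card_cons] at ih ⊢
    rw [Multiset.cons_swap] at ih ⊢
    simpa [← add_assoc, add_right_comm] using ih.add_leaf_white

theorem existsTwoFaceMap_of_isGraft_digon (hg : IsGraft e f A B) (j : ℕ) :
    ExistsTwoFaceMap (2 + e + j) A (Multiset.replicate j 1 + (2 + f) ::ₘ B) (1 + j)
      (1 + (A.card + B.card)) := by
  simpa using (existsOpenTwoFaceMap_digon.graft hg).existsTwoFaceMap.add_inner_leaves j

theorem existsTwoFaceMap_of_isGraft_square (hg : IsGraft e f A B) (i j : ℕ) :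
    ExistsTwoFaceMap (2 + e + j) ((2 + i) ::ₘ A)
      (Multiset.replicate j 1 + (Multiset.replicate i 1 + (2 + f) ::ₘ 2 ::ₘ B)) (2 + j)
      (2 + (A.card + B.card) + i) := by
  have h := existsOpenTwoFaceMap_square.graft hg
  rw [Multiset.add_comm A, Multiset.add_comm B, Multiset.singleton_add, Multiset.singleton_add] at h
  exact (h.add_leaves_black i).existsTwoFaceMap.add_inner_leaves j

theorem eq_replicate_add_replicate {D : Multiset ℕ} (h0 : 0 ∉ D) (h2 : ∀ i ∈ D, i ≤ 2) :
    D = Multiset.replicate (D.count 1) 1 + Multiset.replicate (D.count 2) 2 := by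
  ext i
  rw [Multiset.count_add, Multiset.count_replicate, Multiset.count_replicate]
  by_cases hi : i ∈ D
  · have := ne_of_mem_of_not_mem hi h0
    have := h2 i hi
    obtain rfl | rfl : i = 1 ∨ i = 2 := by omega
    all_goals simp
  · have := Multiset.count_eq_zero_of_notMem hi
    split_ifs <;> subst_vars <;> omega

theorem existsTwoFaceMap_cons (hy : 0 < y) (hxy : y < x) (hA : 0 ∉ A) (hB : 0 ∉ B)
    (hb : 2 ≤ b) (hgrow : A.card + B.card = 0 ∨ y + 1 < x ∨ 2 < b) (hAsum : x + A.sum = y + m)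
    (hBsum : b + B.sum = m + 1) (hcard : A.card + B.card + 1 = m) :
    ExistsTwoFaceMap x A (Multiset.replicate (y - 1) 1 + b ::ₘ B) y m := by
  have hg : IsGraft (x - y - 1) (b - 2) A B :=
    isGraft_of_sum_eq hA hB (by omega) (by omega) (by omega)
  convert existsTwoFaceMap_of_isGraft_digon hg (y - 1) using 1
  · omega
  · rw [Nat.add_sub_cancel' hb]
  · omega
  · omega

theorem existsTwoFaceMap_succ_cons (hy : 2 ≤ y) (hz : 2 ≤ z) (h0 : 0 ∉ R) (h1 : 1 ∉ R)
    (hB : 0 ∉ B) (hB2 : ∀ b ∈ B, b ≤ 2) (hBsum : B.sum = z + R.sum + 2)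
    (hcard : R.card + B.card = z + R.sum) :
    ExistsTwoFaceMap (y + 1) (z ::ₘ R) (Multiset.replicate (y - 1) 1 + B) y (z + R.sum + 1) := by
  have hR := two_mul_card_le_sum h0 h1
  have hdecomp := eq_replicate_add_replicate hB hB2
  have hBcard' := congrArg Multiset.card hdecomp
  have hBsum' := congrArg Multiset.sum hdecomp
  simp only [Multiset.card_add, Multiset.card_replicate, Multiset.sum_add, Multiset.sum_replicate,
    smul_eq_mul] at hBcard' hBsum'
  have hg : IsGraft 1 0 R (Multiset.replicate (R.sum + 1 - 2 * R.card) 1 +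
      Multiset.replicate R.card 2) := by
    refine isGraft_of_sum_eq h0 ?_ (.inr (.inl one_pos)) ?_ ?_
    · simp [Multiset.mem_replicate]
    · simp only [Multiset.card_add, Multiset.card_replicate]
      omega
    · simp only [Multiset.sum_add, Multiset.sum_replicate, Multiset.card_add,
        Multiset.card_replicate, smul_eq_mul]
      omega
  convert existsTwoFaceMap_of_isGraft_square hg (z - 2) (y - 2) using 1
  · omega
  · rw [Nat.add_sub_cancel' hz]
  · rw [hdecomp]
    ext k
    simp only [Multiset.count_add, Multiset.count_cons, Multiset.count_replicate]
    split_ifs <;> omega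
  · omega
  · simp only [Multiset.card_add, Multiset.card_replicate]
    omega

theorem existsTwoFaceMap (hy : 0 < y) (hxy : y < x) (hx : 2 < x) (hR : 0 ∉ R) (hB : 0 ∉ B)
    (hR1 : y = 1 ∨ 1 ∉ R) (hRsum : x + R.sum = y + m) (hBsum : B.sum = m + 1)
    (hcard : R.card + B.card = m) :
    ExistsTwoFaceMap x R (Multiset.replicate (y - 1) 1 + B) y m := by
  obtain ⟨b, hb, hb2⟩ : ∃ b ∈ B, 2 ≤ b := by
    by_contra! h
    have := sum_eq_card_of_lt_two hB h
    omega
  by_cases hgrow : ∃ b ∈ B, 2 ≤ b ∧ (m = 1 ∨ y + 1 < x ∨ 2 < b)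
  · obtain ⟨b, hb, hb2, hgrow⟩ := hgrow
    obtain ⟨B, rfl⟩ := Multiset.exists_cons_of_mem hb
    rw [Multiset.mem_cons, not_or] at hB
    rw [Multiset.sum_cons] at hBsum
    rw [Multiset.card_cons] at hcard
    exact existsTwoFaceMap_cons hy hxy hR hB.2 hb2 (by omega) hRsum hBsum (by omega)
  · push Not at hgrow
    obtain ⟨hm, hxy', -⟩ := hgrow b hb hb2
    obtain rfl : x = y + 1 := by omega
    obtain ⟨z, hz⟩ : ∃ z, z ∈ R := Multiset.exists_mem_of_ne_zero fun hR0 => by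
      rw [hR0, Multiset.sum_zero] at hRsum
      omega
    have hR1 : 1 ∉ R := hR1.resolve_left (by omega)
    have hz2 : 2 ≤ z := by
      have := ne_of_mem_of_not_mem hz hR
      have := ne_of_mem_of_not_mem hz hR1
      omega
    obtain ⟨R, rfl⟩ := Multiset.exists_cons_of_mem hz
    rw [Multiset.mem_cons, not_or] at hR hR1
    rw [Multiset.sum_cons] at hRsum
    rw [Multiset.card_cons] at hcard
    obtain rfl : m = z + R.sum + 1 := by omega
    refine existsTwoFaceMap_succ_cons (by omega) hz2 hR.2 hR1.2 hB (fun c hc => ?_) hBsum (by omega)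
    by_contra! hc2
    exact absurd (hgrow c hc (by omega)).2.2 (by omega)

end Existence

section Assembly

variable {Ω : Type*} [Fintype Ω] [DecidableEq Ω] {a y m : ℕ} {A B : Multiset ℕ}

-- The third face is a separate component: one black vertex carrying `y` white leaves.
theorem ExistsTwoFaceMap.exists_perm (h : ExistsTwoFaceMap a A B y m) (hy : 0 < y)
    (hcard : Fintype.card Ω = 2 * y + m) :
    ∃ (α β : Perm Ω) (u v : Ω), fullCycleType α = a ::ₘ y ::ₘ A ∧
      fullCycleType β = B + Multiset.replicate y 1 ∧ fullCycleType (α * β) = {y, y, m} ∧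
      α.SameCycle u v ∧ minimalPeriod (α * β) u = y ∧ minimalPeriod (α * β) v = m := by
  obtain ⟨Γ, _, _, α, β, p, o, hmap, hα, rfl, rfl, hp, rfl⟩ := h
  obtain ⟨t, hpt, hot⟩ := hmap.meets p
  obtain ⟨τ, hτ⟩ := exists_fullCycleType_eq (Ω := Fin y) (D := {y})
    (by simpa using hy) (by simp)
  have hface : fullCycleType (α * β) = {y, minimalPeriod (α * β) o} := hp ▸ hmap.fullCycleType_mul
  have hΓ : y + minimalPeriod (α * β) o = Fintype.card Γ := by
    rw [← sum_fullCycleType (α * β), hface, Multiset.sum_pair]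
  obtain ⟨e⟩ : Nonempty (Γ ⊕ Fin y ≃ Ω) :=
    Fintype.card_eq.1 (by rw [Fintype.card_sum, Fintype.card_fin, hcard, ← hΓ]; ring)
  have hmul : e.permCongr (Perm.sumCongr α τ) * e.permCongr (Perm.sumCongr β 1) =
      e.permCongr (Perm.sumCongr (α * β) τ) := by
    rw [← Equiv.permCongr_mul, Perm.sumCongr_mul, mul_one]
  have hinj : Injective (e ∘ Sum.inl) := e.injective.comp Sum.inl_injective
  have hsemiconj (σ : Perm Γ) : Semiconj (e ∘ Sum.inl) σ (e.permCongr (Perm.sumCongr σ τ)) :=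
    fun x => by rw [comp_apply, comp_apply, permCongr_apply, symm_apply_apply]; rfl
  refine ⟨e.permCongr (Perm.sumCongr α τ), e.permCongr (Perm.sumCongr β 1), e (.inl p), e (.inl t),
    ?_, ?_, ?_, sameCycle_of_semiconj (f := e ∘ Sum.inl) (hsemiconj α) hpt, ?_, ?_⟩
  · rw [fullCycleType_permCongr, fullCycleType_sumCongr, hα, hτ, Multiset.cons_add,
      Multiset.add_comm, Multiset.singleton_add]
  · rw [fullCycleType_permCongr, fullCycleType_sumCongr, fullCycleType_one, Fintype.card_fin]
  · rw [hmul, fullCycleType_permCongr, fullCycleType_sumCongr, hface, hτ, Multiset.add_comm,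
      Multiset.singleton_add]
    rfl
  · rw [hmul]
    exact (minimalPeriod_eq_of_semiconj hinj (hsemiconj (α * β)) p).trans hp
  · rw [hmul, minimalPeriod_eq_of_sameCycle hot]
    exact minimalPeriod_eq_of_semiconj hinj (hsemiconj (α * β)) t

end Assembly

section Primitivity

section Blocks

open MulAction
open scoped Pointwise

variable {G X : Type*} [Group G] [MulAction G X] {g : G} {u v : X} {B : Set X}

theorem ncard_dvd_card_orbit_of_isBlock {H : Subgroup G} (hB : IsBlock G B) (hne : B.Nonempty)
    (hsub : B ⊆ orbit H u) : B.ncard ∣ Nat.card (orbit H u) := by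
  have hpre : IsBlock H (Subtype.val ⁻¹' B : Set (orbit H u)) :=
    IsBlock.preimage (φ := H.subtype) ⟨Subtype.val, fun _ _ => rfl⟩ hB
  have hncard : (Subtype.val ⁻¹' B : Set (orbit H u)).ncard = B.ncard :=
    Set.ncard_preimage_of_injective_subset_range Subtype.val_injective
      (by rwa [Subtype.range_val])
  rw [← hncard]
  exact hpre.ncard_dvd_card (hne.preimage' (by rwa [Subtype.range_val]))

theorem card_orbit_zpowers [Finite X] (g : G) (u : X) :
    Nat.card (orbit (Subgroup.zpowers g) u) = period g u := by
  have := Fintype.ofFinite (orbit (Subgroup.zpowers g) u)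
  rw [Nat.card_eq_fintype_card, ← minimalPeriod_eq_card, period]

theorem period_dvd_period_of_isBlock (hB : IsBlock G B) (hu : u ∈ B) : period g B ∣ period g u := by
  rw [← pow_smul_eq_iff_period_dvd]
  exact hB.stabilizer_le hu (pow_period_smul g u)

theorem isBlock_eq_univ_of_coprime_period (hB : IsBlock G B) (hu : u ∈ B) (hv : v ∈ B)
    (hcover : ∀ z, z ∈ orbit (Subgroup.zpowers g) u ∨ z ∈ orbit (Subgroup.zpowers g) v)
    (hcop : (period g u).Coprime (period g v)) : B = Set.univ := by
  have hgB : g ∈ stabilizer G B := period_eq_one_iff.1 <| Nat.eq_one_of_dvd_coprimes hcop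
    (period_dvd_period_of_isBlock hB hu) (period_dvd_period_of_isBlock hB hv)
  have horbit {w z : X} (hw : w ∈ B) (hz : z ∈ orbit (Subgroup.zpowers g) w) : z ∈ B := by
    obtain ⟨h, rfl⟩ := hz
    exact (mem_stabilizer_set.1 (Subgroup.zpowers_le.2 hgB h.2) w).2 hw
  exact Set.eq_univ_of_forall fun z => (hcover z).elim (horbit hu) (horbit hv)

variable [Finite X]

theorem period_eq_of_mem_orbit {w : X} (hw : w ∈ orbit (Subgroup.zpowers g) u) :
    period g w = period g u := by
  rw [← card_orbit_zpowers, ← card_orbit_zpowers, orbit_eq_iff.2 hw]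

theorem isBlock_subset_orbit_of_coprime_period (hB : IsBlock G B) (hu : u ∈ B) (hne : B ≠ Set.univ)
    (hcover : ∀ z, z ∈ orbit (Subgroup.zpowers g) u ∨ z ∈ orbit (Subgroup.zpowers g) v)
    (hcop : (period g u).Coprime (period g v)) : B ⊆ orbit (Subgroup.zpowers g) u := by
  refine fun z hz => (hcover z).resolve_right fun hzv => hne ?_
  refine isBlock_eq_univ_of_coprime_period (g := g) hB hu hz ?_ ?_
  · rwa [orbit_eq_iff.2 hzv]
  · rwa [period_eq_of_mem_orbit hzv]

theorem isPreprimitive_of_coprime_period [IsPretransitive G X]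
    (hcover : ∀ z, z ∈ orbit (Subgroup.zpowers g) u ∨ z ∈ orbit (Subgroup.zpowers g) v)
    (hcop : (period g u).Coprime (period g v)) : IsPreprimitive G X := by
  refine .of_isTrivialBlock_base u fun {B} hu hB => or_iff_not_imp_right.2 fun hne => ?_
  obtain ⟨h, rfl⟩ := exists_smul_eq G u v
  have hBu : B.ncard ∣ period g u := by
    rw [← card_orbit_zpowers]
    exact ncard_dvd_card_orbit_of_isBlock hB ⟨u, hu⟩
      (isBlock_subset_orbit_of_coprime_period hB hu hne hcover hcop)
  have hBv : B.ncard ∣ period g (h • u) := by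
    rw [← card_orbit_zpowers, ← Set.ncard_smul_set h B]
    have hmem : h • u ∈ h • B := Set.smul_mem_smul_set hu
    exact ncard_dvd_card_orbit_of_isBlock (hB.translate h) ⟨_, hmem⟩
      (isBlock_subset_orbit_of_coprime_period (hB.translate h) hmem (by simpa using hne)
        (fun z => (hcover z).symm) hcop.symm)
  obtain ⟨w, rfl⟩ := Set.ncard_eq_one.1 (Nat.eq_one_of_dvd_coprimes hcop hBu hBv)
  exact Set.subsingleton_singleton

end Blocks

section Bridge

variable {Ω : Type*} {G : Subgroup (Perm Ω)}

theorem subgroupPrimitive_of_isPreprimitive [Nonempty Ω] (h : MulAction.IsPreprimitive G Ω) :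
    SubgroupPrimitive G := by
  refine ⟨fun x y => ?_, fun Λ ⟨hne, hΛ⟩ => ?_⟩
  · obtain ⟨g, hg⟩ := MulAction.exists_smul_eq G x y
    exact ⟨g, g.2, hg⟩
  · have hblock : MulAction.IsBlock G Λ :=
      MulAction.isBlock_iff_smul_eq_or_disjoint.2 fun g => hΛ g g.2
    refine (h.isTrivialBlock_of_isBlock hblock).imp_left fun hs => ?_
    exact Set.exists_eq_singleton_iff_nonempty_subsingleton.2 ⟨hne, hs⟩

variable {α ω : Perm Ω} {u v : Ω}

theorem mem_orbit_of_sameCycle (hα : α ∈ G) (h : α.SameCycle u v) : v ∈ MulAction.orbit G u :=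
  h.elim fun k hk => ⟨⟨α ^ k, zpow_mem hα k⟩, hk⟩

theorem subgroupPrimitive_of_sameCycle [Finite Ω] (hα : α ∈ G) (hω : ω ∈ G)
    (huv : α.SameCycle u v) (hcover : ∀ z, ω.SameCycle u z ∨ ω.SameCycle v z)
    (hcop : (minimalPeriod ω u).Coprime (minimalPeriod ω v)) : SubgroupPrimitive G := by
  have : Nonempty Ω := ⟨u⟩
  have hv : MulAction.orbit G v = MulAction.orbit G u :=
    MulAction.orbit_eq_iff.2 (mem_orbit_of_sameCycle hα huv)
  have horbit (z : Ω) : z ∈ MulAction.orbit G u :=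
    (hcover z).elim (mem_orbit_of_sameCycle hω) fun hz => hv ▸ mem_orbit_of_sameCycle hω hz
  have : MulAction.IsPretransitive G Ω :=
    (MulAction.isPretransitive_iff_orbit_eq_univ u).2 (Set.eq_univ_of_forall horbit)
  have hmem {w z : Ω} (hz : ω.SameCycle w z) :
      z ∈ MulAction.orbit (Subgroup.zpowers (⟨ω, hω⟩ : G)) w :=
    hz.elim fun k hk => ⟨⟨⟨ω, hω⟩ ^ k, k, rfl⟩, hk⟩
  exact subgroupPrimitive_of_isPreprimitive <|
    isPreprimitive_of_coprime_period (g := ⟨ω, hω⟩) (fun z => (hcover z).imp hmem hmem) hcop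

end Bridge

end Primitivity

section SquareRoot

theorem minimalPeriod_sq {X : Type*} (ω : Perm X) (z : X) :
    minimalPeriod ⇑(ω ^ 2) z = minimalPeriod ω z / (minimalPeriod ω z).gcd 2 := by
  rw [← iterate_eq_pow, minimalPeriod_iterate_eq_div_gcd two_ne_zero]

variable {Ω : Type*} [Fintype Ω] [DecidableEq Ω] {c : Perm Ω} {u v : Ω} {y m : ℕ}

-- The two `y`-cycles of `c` are interlaced, and the odd cycle has a square root of its own length.
theorem exists_sq_eq_of_fullCycleType (hy : 0 < y) (hm : Odd m) (hym : y ≠ m)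
    (hc : fullCycleType c = {y, y, m}) (hu : minimalPeriod c u = y) (hv : minimalPeriod c v = m) :
    ∃ ω : Perm Ω, ω ^ 2 = c ∧ minimalPeriod ω u = 2 * y ∧ minimalPeriod ω v = m ∧
      ∀ z, ω.SameCycle u z ∨ ω.SameCycle v z := by
  have hgcd : m.gcd 2 = 1 := Nat.coprime_two_right.2 hm
  have hpow : powCycleType 2 {2 * y, m} = {y, y, m} := by
    simp [powCycleType, hgcd, Multiset.replicate_succ]
  obtain ⟨ω, rfl, hω⟩ := exists_pow_eq_of_fullCycleType two_ne_zero
    (by simp [hy, hm.pos]) (hc.trans hpow.symm)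
  have hperiod (z : Ω) : minimalPeriod ω z = 2 * y ∨ minimalPeriod ω z = m := by
    simpa [hω] using (mem_fullCycleType_iff (σ := ω)).2 ⟨z, rfl⟩
  have hωu : minimalPeriod ω u = 2 * y := (hperiod u).resolve_right fun h => hym <| by
    rw [← hu, minimalPeriod_sq, h, hgcd, Nat.div_one]
  have hωv : minimalPeriod ω v = m := (hperiod v).resolve_left fun h => hym <| by
    rw [← hv, minimalPeriod_sq, h, Nat.gcd_mul_right_left, Nat.mul_div_cancel_left y two_pos]
  have hne : 2 * y ≠ m := fun h => Nat.not_even_iff_odd.2 hm (h ▸ even_two_mul y)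
  refine ⟨ω, rfl, hωu, hωv, fun z => (hperiod z).imp (fun hz => ?_) fun hz => ?_⟩
  · exact sameCycle_of_count_eq_one (by simp [hω, hωu, hne]) (hz.trans hωu.symm)
  · exact sameCycle_of_count_eq_one (by simp [hω, hωv, hne.symm]) (hz.trans hωv.symm)

end SquareRoot

section Passport

variable {D D₂ R : Multiset ℕ} {d x y m : ℕ}

theorem nu_add_card (hD : ∀ i ∈ D, 0 < i) : nu D + D.card = D.sum :=
  calc nu D + D.card = (D.map fun i => i - 1 + 1).sum := by simp [nu, Multiset.sum_map_add]
    _ = D.sum := by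
      rw [Multiset.map_congr rfl fun i hi => Nat.sub_add_cancel (hD i hi), Multiset.map_id']

theorem two_mul_card_le_sum_add_count (hD : 0 ∉ D) : 2 * D.card ≤ D.sum + D.count 1 := by
  have hsplit : Multiset.replicate (D.count 1) 1 + D.filter (· ≠ 1) = D := by
    rw [← Multiset.filter_eq', Multiset.filter_add_not]
  have hbig : 2 * (D.filter (· ≠ 1)).card ≤ (D.filter (· ≠ 1)).sum :=
    two_mul_card_le_sum (by simp [hD]) (by simp)
  have hcard := congrArg Multiset.card hsplit
  have hsum := congrArg Multiset.sum hsplit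
  simp only [Multiset.card_add, Multiset.card_replicate, Multiset.sum_add,
    Multiset.sum_replicate, smul_eq_mul] at hcard hsum
  omega

theorem exists_eq_cons_cons (hx : x ∈ D) (hy : y ∈ D) (hyx : y < x) (hgcd : y.Coprime d)
    (hx2 : 1 < x) :
    ∃ z R, D = x ::ₘ z ::ₘ R ∧ z < x ∧ z.Coprime d ∧ (z = 1 ∨ 1 ∉ R) := by
  obtain ⟨z, hz, hzx, hzd, hz1⟩ : ∃ z ∈ D, z < x ∧ z.Coprime d ∧ (z = 1 ∨ 1 ∉ D) := by
    by_cases h1 : 1 ∈ D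
    · exact ⟨1, h1, hx2, Nat.coprime_one_left d, .inl rfl⟩
    · exact ⟨y, hy, hyx, hgcd, .inr h1⟩
  obtain ⟨E, rfl⟩ := Multiset.exists_cons_of_mem hx
  obtain ⟨R, rfl⟩ := Multiset.exists_cons_of_mem ((Multiset.mem_cons.1 hz).resolve_left hzx.ne)
  exact ⟨z, R, rfl, hzx, hzd, hz1.imp_right fun h hR => h (by simp [hR])⟩

theorem two_mul_le_count_one_succ (h₁ : IsPartitionOf d (x ::ₘ y ::ₘ R)) (h₂ : IsPartitionOf d D₂)
    (hsum : nu (x ::ₘ y ::ₘ R) + nu D₂ = d - 1) (hord : nu D₂ ≤ nu (x ::ₘ y ::ₘ R))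
    (hyx : y < x) (hy : y = 1 ∨ 1 ∉ R) : 2 * y ≤ D₂.count 1 + 1 := by
  have hnu₁ := nu_add_card h₁.1
  have hnu₂ := nu_add_card h₂.1
  have hcount := two_mul_card_le_sum_add_count fun h => (h₂.1 0 h).false
  have hsum₁ := h₁.2
  rw [h₂.2] at hnu₂ hcount
  simp only [Multiset.sum_cons, Multiset.card_cons] at hsum₁ hnu₁
  rcases hy with rfl | hR1
  · omega
  · have hR := two_mul_card_le_sum (fun h => (h₁.1 0 (by simp [h])).false) hR1
    omega

theorem exists_existsTwoFaceMap (h₁ : IsPartitionOf d (x ::ₘ y ::ₘ R)) (h₂ : IsPartitionOf d D₂)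
    (hsum : nu (x ::ₘ y ::ₘ R) + nu D₂ = d - 1) (hord : nu D₂ ≤ nu (x ::ₘ y ::ₘ R))
    (hyx : y < x) (hx : 2 < x) (hy : y = 1 ∨ 1 ∉ R) :
    ∃ B m, D₂ = B + Multiset.replicate y 1 ∧ d = 2 * y + m ∧ ExistsTwoFaceMap x R B y m := by
  have hy0 : 0 < y := h₁.1 y (by simp)
  have hcount := two_mul_le_count_one_succ h₁ h₂ hsum hord hyx hy
  have hnu₁ := nu_add_card h₁.1
  have hnu₂ := nu_add_card h₂.1
  have hsum₁ := h₁.2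
  have hsum₂ := h₂.2
  obtain ⟨B, rfl⟩ := Multiset.le_iff_exists_add.1
    (Multiset.le_count_iff_replicate_le.1 (Nat.sub_le_of_le_add hcount))
  simp only [Multiset.sum_cons, Multiset.card_cons, Multiset.sum_add, Multiset.card_add,
    Multiset.card_replicate, Multiset.sum_replicate, smul_eq_mul] at hsum₁ hsum₂ hnu₁ hnu₂
  refine ⟨Multiset.replicate (y - 1) 1 + B, d - 2 * y, ?_, by omega, existsTwoFaceMap hy0 hyx hx
    (fun h => (h₁.1 0 (by simp [h])).false) (fun h => (h₂.1 0 (by simp [h])).false) hy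
    (by omega) (by omega) (by omega)⟩
  rw [add_right_comm, ← Multiset.replicate_add]
  congr 2
  omega

theorem odd_and_coprime_of_eq_add (hd : Odd d) (hdm : d = 2 * y + m) (hgcd : y.Coprime d) :
    Odd m ∧ y.Coprime m := by
  subst hdm
  exact ⟨(Nat.odd_add'.1 hd).2 (even_two_mul y), by simpa using hgcd⟩

end Passport

/-- If `D₁` contains parts `x > max{y,2}` with `gcd(y,d)=1`, then there exist
`α ∈ D₁`, `β ∈ D₂` and `ω` with `ω² = αβ` such that `⟨α, β, ω⟩` is primitive. -/
theorem statement_6 {Ω : Type*} [Fintype Ω] [DecidableEq Ω] (d : ℕ)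
    (hcard : Fintype.card Ω = d) (hd : Odd d) (hdpos : 0 < d)
    (D₁ D₂ : Multiset ℕ) (hP1 : IsPartitionOf d D₁) (hP2 : IsPartitionOf d D₂)
    (hnt1 : D₁ ≠ {d} ∧ D₁ ≠ Multiset.replicate d 1)
    (hnt2 : D₂ ≠ {d} ∧ D₂ ≠ Multiset.replicate d 1)
    (hsum : nu D₁ + nu D₂ = d - 1) (hord : nu D₂ ≤ nu D₁)
    (x y : ℕ) (hx : x ∈ D₁) (hy : y ∈ D₁) (hxy : max y 2 < x)
    (hgcd : Nat.gcd y d = 1) :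
    ∃ α β ω : Equiv.Perm Ω, fullCycleType α = D₁ ∧ fullCycleType β = D₂ ∧
      ω ^ 2 = α * β ∧ SubgroupPrimitive (Subgroup.closure {α, β, ω}) := by
  obtain ⟨hyx, hx2⟩ := max_lt_iff.1 hxy
  obtain ⟨z, R, rfl, hzx, hzd, hz1⟩ := exists_eq_cons_cons hx hy hyx hgcd (by omega)
  have hz : 0 < z := hP1.1 z (by simp)
  obtain ⟨B, m, rfl, hdm, hmap⟩ := exists_existsTwoFaceMap hP1 hP2 hsum hord hzx hx2 hz1
  obtain ⟨hm, hzm⟩ := odd_and_coprime_of_eq_add hd hdm hzd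
  obtain ⟨α, β, u, v, hα, hβ, hαβ, huv, hu, hv⟩ := hmap.exists_perm hz (hcard.trans hdm)
  have hne : z ≠ m := by
    rintro rfl
    have hz_one : z = 1 := by simpa using hzm
    have hsum₁ := hP1.2
    simp only [Multiset.sum_cons] at hsum₁
    omega
  obtain ⟨ω, hω, hωu, hωv, hcover⟩ := exists_sq_eq_of_fullCycleType hz hm hne hαβ hu hv
  refine ⟨α, β, ω, hα, hβ, hω, subgroupPrimitive_of_sameCycle
    (Subgroup.subset_closure (by simp)) (Subgroup.subset_closure (by simp)) huv hcover ?_⟩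
  rw [hωu, hωv]
  exact Nat.Coprime.mul_left (Nat.coprime_two_left.2 hm) hzm
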